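/- arXiv:2010.05881 — 2 statements merged into one kernel-verified Lean document; each statement's English description precedes it below -/
import Mathlib

section
/- Let d ≥ 2 and l > d be integers, let N = (n_{jk}) (j = 1,…,d, k = 1,…,l) be a fixed d×l integer matrix of rank d, and let a > 0. Then the Lebesgue measure of the set {ω⃗ = (ω₁,…,ω_l) ∈ ([−1/2,1/2]^d)^l : |det(θ₁(ω⃗,N),…,θ_d(ω⃗,N))| < a} is strictly less than 2·d·a^{1/d}. -/
open MeasureTheory Set

noncomputable section

/-- `θ_j(ω⃗,N) := ∑_k n_{jk} ω_k`; this is the determinant of the `d×d` matrix whose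
columns are `θ₁,…,θ_d`, i.e. whose `(i,j)` entry is the `i`-th coordinate of `θ_j`. -/
def thetaDet {d l : ℕ} (ω : Fin l → EuclideanSpace ℝ (Fin d))
    (N : Matrix (Fin d) (Fin l) ℤ) : ℝ :=
  Matrix.det (Matrix.of fun i j : Fin d => ∑ k, (N j k : ℝ) * ω k i)

/-!
Choose columns `σ` of `N` with `c = det N_σ ≠ 0`; integrality gives `|c| ≥ 1`. With
`A = N_σ⁻¹ N`, whose columns `σ` form the identity, and `X` the matrix with rows `ω_k`, the
determinant in question is `c * det (A X)`. The variable `X (σ r) r` enters `A X` only through its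
`r`-th diagonal entry, with coefficient one. Hence the `(r + 1)`-st leading principal minor of
`A X` is affine in this variable, with slope the `r`-th one. An affine function of slope at least
`t ^ r` in absolute value is smaller than `t ^ (r + 1)` on an interval of length at most `2 t`, so
by induction the `r`-th minor is at least `t ^ r` in absolute value with probability at least
`max (1 - 2 t) 0 ^ r`. For `r = d` and `t ^ d = a / |c|` the strict Bernoulli inequality finishes
the proof.
-/

lemma one_sub_mul_lt_max_zero_pow {n : ℕ} (hn : 2 ≤ n) {u : ℝ} (hu : 0 < u) :
    1 - n * u < max (1 - u) 0 ^ n := by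
  have hn' : (1 : ℝ) < n := by exact_mod_cast hn
  rcases le_total u 1 with hu1 | hu1
  · have bernoulli := one_add_mul_self_lt_rpow_one_add (s := -u) (by linarith) (by linarith) hn'
    rw [Real.rpow_natCast, mul_neg, ← sub_eq_add_neg, ← sub_eq_add_neg] at bernoulli
    rwa [max_eq_left (by linarith)]
  · calc 1 - n * u < 0 := by nlinarith
      _ ≤ max (1 - u) 0 ^ n := by positivity

lemma measurePreserving_uncurry {ι κ X : Type*} [Fintype ι] [Fintype κ] [MeasurableSpace X]
    (μ : ι → κ → Measure X) [∀ i j, SigmaFinite (μ i j)] :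
    MeasurePreserving (Function.uncurry : (ι → κ → X) → ι × κ → X)
      (Measure.pi fun i => Measure.pi (μ i)) (Measure.pi fun p => μ p.1 p.2) := by
  have uncurry_measurable : Measurable (Function.uncurry : (ι → κ → X) → ι × κ → X) :=
    (MeasurableEquiv.curry ι κ X).symm.measurable
  refine ⟨uncurry_measurable, (Measure.pi_eq fun s hs => ?_).symm⟩
  have preimage_box : Function.uncurry ⁻¹' univ.pi s =
      univ.pi fun i => univ.pi fun j => s (i, j) := by
    ext
    simp [Set.mem_pi]
  rw [Measure.map_apply uncurry_measurable (.univ_pi hs), preimage_box, Fintype.prod_prod_type]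
  simp only [Measure.pi_pi]

lemma volume_forall_mem_and_uncurry_mem {κ ι : Type*} [Fintype κ] [Fintype ι] {s : Set ℝ}
    (hs : MeasurableSet s) {S : Set (κ × ι → ℝ)} (hS : MeasurableSet S) :
    volume {ω : κ → EuclideanSpace ℝ ι |
        (∀ k i, ω k i ∈ s) ∧ (fun p : κ × ι => ω p.1 p.2) ∈ S} =
      Measure.pi (fun _ : κ × ι => volume.restrict s) S := by
  have flatten : MeasurePreserving
      (fun (ω : κ → EuclideanSpace ℝ ι) (p : κ × ι) => ω p.1 p.2) volume volume :=
    (measurePreserving_uncurry fun _ _ => volume).comp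
      (volume_preserving_pi fun _ => PiLp.volume_preserving_ofLp ι)
  have box_measurable : MeasurableSet (univ.pi fun _ : κ × ι => s) := .univ_pi fun _ => hs
  rw [← Measure.restrict_pi_pi, ← volume_pi, Measure.restrict_apply hS,
    ← flatten.measure_preimage (hS.inter box_measurable).nullMeasurableSet]
  congr 1
  ext ω
  simp [Set.mem_pi, and_comm]

lemma mul_measure_pi_le_of_forall_update {ι : Type*} [Fintype ι] [DecidableEq ι] {X : ι → Type*}
    [∀ i, MeasurableSpace (X i)] (μ : ∀ i, Measure (X i)) [∀ i, SigmaFinite (μ i)] (i : ι)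
    [IsProbabilityMeasure (μ i)] {S T : Set (∀ i, X i)} (hS : MeasurableSet S)
    (hT : MeasurableSet T) (S_update : ∀ x y, Function.update x i y ∈ S ↔ x ∈ S) {c : ENNReal}
    (hc : ∀ x ∈ S, c ≤ μ i {y | Function.update x i y ∈ T}) :
    c * Measure.pi μ S ≤ Measure.pi μ T := by
  rw [← lintegral_indicator_one hS, ← lintegral_indicator_one hT,
    ← lintegral_const_mul c (measurable_one.indicator hS)]
  refine lintegral_le_of_lmarginal_le {i} ((measurable_one.indicator hS).const_mul c)
    (measurable_one.indicator hT) fun x => ?_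
  rw [lmarginal_singleton, lmarginal_singleton]
  by_cases hx : x ∈ S
  · have slice_measurable : MeasurableSet {y | Function.update x i y ∈ T} :=
      measurable_update x hT
    calc ∫⁻ y, c * S.indicator 1 (Function.update x i y) ∂μ i = c := by
          simp [Set.indicator, S_update, hx]
      _ ≤ μ i {y | Function.update x i y ∈ T} := hc x hx
      _ = ∫⁻ y, T.indicator 1 (Function.update x i y) ∂μ i :=
          (lintegral_indicator_one slice_measurable).symm
  · simp [Set.indicator, S_update, hx]

lemma ofReal_one_sub_le_measure_le_abs_affine {ν : Measure ℝ} [IsProbabilityMeasure ν]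
    (hν : ν ≤ volume) {p q s t : ℝ} (hs : 0 < s) (ht : 0 ≤ t) (hq : s ≤ |q|) :
    ENNReal.ofReal (1 - 2 * t) ≤ ν {y | s * t ≤ |p + y * q|} := by
  have hq0 : q ≠ 0 := abs_pos.mp (hs.trans_le hq)
  have compl_ball_subset : (Metric.ball (-p / q) t)ᶜ ⊆ {y | s * t ≤ |p + y * q|} := by
    intro y hy
    rw [mem_compl_iff, Metric.mem_ball, not_lt, Real.dist_eq] at hy
    calc s * t ≤ |q| * |y - -p / q| := by gcongr
      _ = |p + y * q| := by rw [← abs_mul]; congr 1; field_simp; ring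
  calc ENNReal.ofReal (1 - 2 * t) = 1 - volume (Metric.ball (-p / q) t) := by
        rw [Real.volume_ball, ENNReal.ofReal_sub _ (by positivity), ENNReal.ofReal_one]
    _ ≤ 1 - ν (Metric.ball (-p / q) t) := tsub_le_tsub_left (hν _) 1
    _ = ν (Metric.ball (-p / q) t)ᶜ := (prob_compl_eq_one_sub measurableSet_ball).symm
    _ ≤ ν {y | s * t ≤ |p + y * q|} := measure_mono compl_ball_subset

lemma ofReal_one_sub_mul_measure_pi_le_abs {ι : Type*} [Fintype ι] [DecidableEq ι]
    {ν : ι → Measure ℝ} [∀ i, SigmaFinite (ν i)] {i : ι} [IsProbabilityMeasure (ν i)]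
    (hν : ν i ≤ volume) {f g : (ι → ℝ) → ℝ} (hf : Measurable f) (hg : Measurable g)
    (f_update : ∀ x y, f (Function.update x i y) = f x)
    (g_update : ∀ x y, g (Function.update x i y) = g x + (y - x i) * f x)
    {s t : ℝ} (hs : 0 < s) (ht : 0 ≤ t) :
    ENNReal.ofReal (1 - 2 * t) * Measure.pi ν {x | s ≤ |f x|} ≤
      Measure.pi ν {x | s * t ≤ |g x|} := by
  refine mul_measure_pi_le_of_forall_update ν i (measurableSet_le measurable_const hf.abs)
    (measurableSet_le measurable_const hg.abs) (fun x y => by simp [f_update]) fun x hx => ?_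
  have g_slice (y : ℝ) : g (Function.update x i y) = (g x - x i * f x) + y * f x := by
    rw [g_update]
    ring
  simpa only [mem_ofPred_eq, g_slice] using ofReal_one_sub_le_measure_le_abs_affine hν hs ht hx

section LeadingMinor

variable {R : Type*} [CommRing R]

/-- The `m`-th leading principal minor of a `d × d` matrix: the determinant of its upper left
`m × m` block. Passing from `m` to `m + 1` is the induction step of the measure estimate. -/
def leadingMinor {d : ℕ} (M : Matrix (Fin d) (Fin d) R) (m : ℕ) (hm : m ≤ d) : R :=
  (M.submatrix (Fin.castLE hm) (Fin.castLE hm)).det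

lemma det_add_single_last {m : ℕ} (M : Matrix (Fin (m + 1)) (Fin (m + 1)) R) (c : R) :
    (M + Matrix.single (Fin.last m) (Fin.last m) c).det =
      M.det + c * (M.submatrix Fin.castSucc Fin.castSucc).det := by
  have add_single_eq : M + Matrix.single (Fin.last m) (Fin.last m) c =
      M.updateRow (Fin.last m) (M (Fin.last m) + c • Pi.single (Fin.last m) 1) := by
    ext i j
    by_cases hi : i = Fin.last m
    · subst hi
      simp [Matrix.single_apply, Pi.single_apply, eq_comm]
    · simp [hi, Ne.symm hi]
  rw [add_single_eq, Matrix.det_updateRow_add, Matrix.det_updateRow_smul,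
    Matrix.updateRow_eq_self, ← Matrix.adjugate_apply,
    Matrix.adjugate_fin_succ_eq_det_submatrix]
  simp [Fin.succAbove_last, ← two_mul]

variable {d : ℕ} (M : Matrix (Fin d) (Fin d) R) (r : Fin d) (c : R)

lemma leadingMinor_add_single :
    leadingMinor (M + Matrix.single r r c) r r.isLt.le = leadingMinor M r r.isLt.le := by
  unfold leadingMinor
  congr 1
  ext i j
  simp [Fin.ext_iff, i.isLt.ne']

lemma leadingMinor_succ_add_single :
    leadingMinor (M + Matrix.single r r c) (r + 1) r.isLt =
      leadingMinor M (r + 1) r.isLt + c * leadingMinor M r r.isLt.le := by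
  have submatrix_add_single :
      (M + Matrix.single r r c).submatrix (Fin.castLE r.isLt) (Fin.castLE r.isLt) =
        M.submatrix (Fin.castLE r.isLt) (Fin.castLE r.isLt) +
          Matrix.single (Fin.last r) (Fin.last r) c := by
    ext i j
    simp [Matrix.single_apply, Fin.ext_iff]
  rw [leadingMinor, submatrix_add_single, det_add_single_last]
  rfl

end LeadingMinor

lemma exists_det_submatrix_ne_zero {m n K : Type*} [Fintype m] [DecidableEq m] [Fintype n]
    [Field K] {A : Matrix m n K} (hA : A.rank = Fintype.card m) :
    ∃ σ : m → n, (A.submatrix id σ).det ≠ 0 := by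
  obtain ⟨κ, col, col_injective, span_eq, col_indep⟩ := exists_linearIndependent' K A.col
  have := Finite.of_injective col col_injective
  have := Fintype.ofFinite κ
  have card_eq : Fintype.card m = Fintype.card κ := by
    rw [← hA, Matrix.rank_eq_finrank_span_cols, ← span_eq, finrank_span_eq_card col_indep]
  let e : m ≃ κ := Fintype.equivOfCardEq card_eq
  have submatrix_indep : LinearIndependent K (A.submatrix id (col ∘ e)).col :=
    col_indep.comp e e.injective
  rw [Matrix.linearIndependent_cols_iff_isUnit, Matrix.isUnit_iff_isUnit_det] at submatrix_indep
  exact ⟨col ∘ e, submatrix_indep.ne_zero⟩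

lemma one_le_abs_det_map_intCast {n : Type*} [Fintype n] [DecidableEq n] {M : Matrix n n ℤ}
    (hM : (M.map fun z => (z : ℝ)).det ≠ 0) : 1 ≤ |(M.map fun z => (z : ℝ)).det| := by
  rw [← Int.cast_det] at hM ⊢
  exact_mod_cast Int.one_le_abs (Int.cast_ne_zero.mp hM)

lemma submatrix_nonsing_inv_mul {m n R : Type*} [Fintype m] [DecidableEq m] [CommRing R]
    {A : Matrix m n R} {σ : m → n} (hσ : IsUnit (A.submatrix id σ).det) :
    ((A.submatrix id σ)⁻¹ * A).submatrix id σ = 1 :=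
  Matrix.nonsing_inv_mul _ hσ

section RandomMatrix

lemma mul_of_curry_update {m n κ R : Type*} [Fintype κ] [DecidableEq κ] [DecidableEq m]
    [DecidableEq n] [Ring R] {A : Matrix m κ R} {σ : m → κ} (hA : A.submatrix id σ = 1)
    (x : κ × n → R) (r : m) (j : n) (y : R) :
    A * Matrix.of (Function.curry (Function.update x (σ r, j) y)) =
      A * Matrix.of (Function.curry x) + Matrix.single r j (y - x (σ r, j)) := by
  have curry_update : Matrix.of (Function.curry (Function.update x (σ r, j) y)) =
      Matrix.of (Function.curry x) + Matrix.single (σ r) j (y - x (σ r, j)) := by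
    ext k i
    by_cases h : σ r = k ∧ j = i
    · obtain ⟨rfl, rfl⟩ := h
      simp
    · have : (k, i) ≠ (σ r, j) := by grind
      simp [Matrix.single_apply_of_ne, h, this]
  rw [curry_update, Matrix.mul_add]
  congr 1
  ext i k
  have A_col : A i (σ r) = (1 : Matrix m m R) i r := congrFun₂ hA i r
  by_cases hk : k = j
  · subst hk
    simp [A_col, Matrix.one_apply, Matrix.single_apply, eq_comm]
  · simp [hk, Matrix.single_apply_of_col_ne _ _ (Ne.symm hk)]

variable {d : ℕ} {κ : Type*} [Fintype κ] {A : Matrix (Fin d) κ ℝ} {σ : Fin d → κ}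

lemma measurable_leadingMinor_mul (A : Matrix (Fin d) κ ℝ) (m : ℕ) (hm : m ≤ d) :
    Measurable fun x : κ × Fin d → ℝ =>
      leadingMinor (A * Matrix.of (Function.curry x)) m hm := by
  have entries_continuous :
      Continuous fun x : κ × Fin d → ℝ => A * Matrix.of (Function.curry x) := by
    refine continuous_const.matrix_mul (continuous_matrix fun k i => ?_)
    exact continuous_apply (k, i)
  exact (entries_continuous.matrix_submatrix _ _).matrix_det.measurable

variable {ν : κ × Fin d → Measure ℝ} [∀ p, IsProbabilityMeasure (ν p)]

lemma ofReal_one_sub_pow_le_measure_leadingMinor (hA : A.submatrix id σ = 1)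
    (hν : ∀ p, ν p ≤ volume) {t : ℝ} (ht : 0 < t) (m : ℕ) (hm : m ≤ d) :
    ENNReal.ofReal (1 - 2 * t) ^ m ≤
      Measure.pi ν {x | t ^ m ≤ |leadingMinor (A * Matrix.of (Function.curry x)) m hm|} := by
  classical
  induction m with
  | zero => simp [leadingMinor]
  | succ m ih =>
    let r : Fin d := ⟨m, hm⟩
    calc ENNReal.ofReal (1 - 2 * t) ^ (m + 1)
        ≤ ENNReal.ofReal (1 - 2 * t) * Measure.pi ν
            {x | t ^ m ≤ |leadingMinor (A * Matrix.of (Function.curry x)) m r.isLt.le|} := by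
          rw [pow_succ']
          gcongr
          exact ih r.isLt.le
      _ ≤ Measure.pi ν {x | t ^ m * t ≤
            |leadingMinor (A * Matrix.of (Function.curry x)) (m + 1) hm|} := by
          refine ofReal_one_sub_mul_measure_pi_le_abs (hν (σ r, r))
            (measurable_leadingMinor_mul A m r.isLt.le)
            (measurable_leadingMinor_mul A (m + 1) hm) (fun x y => ?_) (fun x y => ?_)
            (pow_pos ht m) ht.le
          · rw [mul_of_curry_update hA]
            exact leadingMinor_add_single _ r _
          · rw [mul_of_curry_update hA]
            exact leadingMinor_succ_add_single _ r _

lemma measure_abs_det_mul_lt_of_submatrix_eq_one (hd : 2 ≤ d) (hA : A.submatrix id σ = 1)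
    (hν : ∀ p, ν p ≤ volume) {t : ℝ} (ht : 0 < t) :
    Measure.pi ν {x | |(A * Matrix.of (Function.curry x)).det| < t ^ d} <
      ENNReal.ofReal (2 * d * t) := by
  let D (x : κ × Fin d → ℝ) : ℝ := (A * Matrix.of (Function.curry x)).det
  have D_measurable : Measurable D := measurable_leadingMinor_mul A d le_rfl
  have small_measurable : MeasurableSet {x | |D x| < t ^ d} :=
    measurableSet_lt D_measurable.abs measurable_const
  have large_prob : max (1 - 2 * t) 0 ^ d ≤ (Measure.pi ν).real {x | |D x| < t ^ d}ᶜ := by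
    rw [← ENNReal.toReal_ofReal', ← ENNReal.toReal_pow]
    refine ENNReal.toReal_mono (measure_ne_top _ _) ?_
    simp only [compl_ofPred, not_lt]
    exact ofReal_one_sub_pow_le_measure_leadingMinor hA hν ht d le_rfl
  rw [ENNReal.lt_ofReal_iff_toReal_lt (measure_ne_top _ _)]
  calc (Measure.pi ν).real {x | |D x| < t ^ d}
      = 1 - (Measure.pi ν).real {x | |D x| < t ^ d}ᶜ := by
        rw [probReal_compl_eq_one_sub small_measurable, sub_sub_cancel]
    _ ≤ 1 - max (1 - 2 * t) 0 ^ d := by gcongr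
    _ < d * (2 * t) := by linarith [one_sub_mul_lt_max_zero_pow hd (u := 2 * t) (by positivity)]
    _ = 2 * d * t := by ring

lemma measure_abs_det_mul_lt (hd : 2 ≤ d) (hσ : (A.submatrix id σ).det ≠ 0)
    (hν : ∀ p, ν p ≤ volume) {a : ℝ} (ha : 0 < a) :
    Measure.pi ν {x | |(A * Matrix.of (Function.curry x)).det| < a} <
      ENNReal.ofReal (2 * d * (a / |(A.submatrix id σ).det|) ^ ((1 : ℝ) / d)) := by
  set B := A.submatrix id σ
  have hB : 0 < |B.det| := abs_pos.mpr hσ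
  have root_pow : ((a / |B.det|) ^ ((1 : ℝ) / d)) ^ d = a / |B.det| := by
    rw [one_div]
    exact Real.rpow_inv_natCast_pow (by positivity) (by lia)
  have det_eq (x : κ × Fin d → ℝ) : (A * Matrix.of (Function.curry x)).det =
      B.det * (B⁻¹ * A * Matrix.of (Function.curry x)).det := by
    rw [← Matrix.det_mul, Matrix.mul_assoc, Matrix.mul_nonsing_inv_cancel_left _ _ hσ.isUnit]
  simpa only [det_eq, abs_mul, root_pow, lt_div_iff₀' hB] using
    measure_abs_det_mul_lt_of_submatrix_eq_one hd (submatrix_nonsing_inv_mul hσ.isUnit) hν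
      (t := (a / |B.det|) ^ ((1 : ℝ) / d)) (by positivity)

end RandomMatrix

theorem measure_small_det_lt_general {d : ℕ} (hd : 2 ≤ d) {κ : Type*} [Fintype κ]
    {A : Matrix (Fin d) κ ℝ} {σ : Fin d → κ} (hσ : (A.submatrix id σ).det ≠ 0)
    {a : ℝ} (ha : 0 < a) :
    volume {ω : κ → EuclideanSpace ℝ (Fin d) |
        (∀ k i, ω k i ∈ Set.Icc (-(1 : ℝ) / 2) (1 / 2)) ∧
          |(Matrix.of fun i j : Fin d => ∑ k, A j k * ω k i).det| < a} <
      ENNReal.ofReal (2 * d * (a / |(A.submatrix id σ).det|) ^ ((1 : ℝ) / d)) := by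
  have small_measurable : MeasurableSet
      {x : κ × Fin d → ℝ | |(A * Matrix.of (Function.curry x)).det| < a} :=
    measurableSet_lt (measurable_leadingMinor_mul A d le_rfl).abs measurable_const
  have det_eq (ω : κ → EuclideanSpace ℝ (Fin d)) :
      (Matrix.of fun i j : Fin d => ∑ k, A j k * ω k i).det =
        (A * Matrix.of (Function.curry fun p : κ × Fin d => ω p.1 p.2)).det :=
    (Matrix.det_transpose _).symm
  have : IsProbabilityMeasure (volume.restrict (Icc (-(1 : ℝ) / 2) (1 / 2))) :=
    ⟨by norm_num [Real.volume_Icc]⟩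
  simp only [det_eq]
  exact (volume_forall_mem_and_uncurry_mem measurableSet_Icc small_measurable).trans_lt
    (measure_abs_det_mul_lt hd hσ (fun _ => Measure.restrict_le_self) ha)

/-- Let `d ≥ 2`, `l > d`, let `N` be a fixed `d×l` integer matrix of
rank `d`, and let `a > 0`.  Then the Lebesgue measure of the set of frequency vectors
`ω⃗ ∈ ([−1/2,1/2]^d)^l` with `|det(θ₁(ω⃗,N),…,θ_d(ω⃗,N))| < a` is strictly less than
`2·d·a^{1/d}`. -/
theorem measure_small_det_lt (d l : ℕ) (hd : 2 ≤ d) (hl : d < l)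
    (N : Matrix (Fin d) (Fin l) ℤ)
    (hN : (N.map fun z => (z : ℝ)).rank = d)
    (a : ℝ) (ha : 0 < a) :
    volume {ω : Fin l → EuclideanSpace ℝ (Fin d) |
        (∀ k i, ω k i ∈ Set.Icc (-(1 : ℝ)/2) (1/2)) ∧ |thetaDet ω N| < a} <
      ENNReal.ofReal (2 * d * a ^ ((1 : ℝ)/d)) := by
  obtain ⟨σ, hσ⟩ := exists_det_submatrix_ne_zero (hN.trans (Fintype.card_fin d).symm)
  have minor_ge_one := one_le_abs_det_map_intCast (M := N.submatrix id σ) hσ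
  refine (measure_small_det_lt_general hd hσ ha).trans_le ?_
  gcongr
  exact div_le_self ha.le minor_ge_one

end
end

section
/- Fix μ̂ > l·d². For every B₀ > 0, the Lebesgue measure of the set of ω⃗ ∈ ([−1/2,1/2]^d)^l for which there exists a nondegenerate d×l integer matrix N with |det(θ₁(ω⃗,N),…,θ_d(ω⃗,N))| < B₀·‖N‖_*^{−μ̂} is at most C(μ̂)·B₀^{1/d}, where C(μ̂) := 2^{ld}·l·d²·Σ_{M=1}^∞ M^{ld−μ̂/d−1} < ∞. Consequently, the set of ω⃗ ∈ ([−1/2,1/2]^d)^l satisfying the Strong Diophantine Condition with exponent μ̂ and some constant B₀ = B₀(ω⃗) > 0 has full Lebesgue measure in ([−1/2,1/2]^d)^l. -/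
open MeasureTheory Set

noncomputable section

/-- `‖N‖_* := ∑_{j,k} |n_{jk}|`, as a real number. -/
def starNorm {d l : ℕ} (N : Matrix (Fin d) (Fin l) ℤ) : ℝ :=
  ((∑ j, ∑ k, (N j k).natAbs : ℕ) : ℝ)

/-- The Strong Diophantine Condition with constants `B₀ > 0` and exponent `μhat`:
`|det(θ₁(ω⃗,N),…,θ_d(ω⃗,N))| > B₀·‖N‖_*^{−μhat}` for every nondegenerate `N`. -/
def SDC (d l : ℕ) (ω : Fin l → EuclideanSpace ℝ (Fin d)) (B₀ μhat : ℝ) : Prop :=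
  ∀ N : Matrix (Fin d) (Fin l) ℤ, (N.map fun z => (z : ℝ)).rank = d →
    B₀ * starNorm N ^ (-μhat) < |thetaDet ω N|

/-!
Fix a nondegenerate `N`, and let `κ` select `d` columns of `N` forming a nonzero minor. As a
function of the single coordinate `(ω_{κ i})_i`, the determinant `det(θ₁, …, θ_d)` is affine, and
its slope is the determinant with the `i`-th row replaced by the `κ i`-th column of `N`. Treating
the rows one after another, the `d`-th slope is the chosen integer minor, of modulus at least `1`.
An affine function of one variable with slope at least `η^(k-1)` is below `η^k` only on a set of
measure `2η`, so `|det| < η^d` has measure at most `2dη`.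

The condition is the same for `N` and `-N`, so for each norm `M` it suffices to treat half of the
sphere `‖N‖_* = M`; this absorbs the factor `2` into the number `2^{ld}` of sign patterns. Taking
`η = (B₀ M^{-μhat})^{1/d}` and summing over `M` gives the measure bound, and `B₀ → 0` gives full
measure.
-/

section Slopes

variable {ι : Type*} [DecidableEq ι] {P Q : (ι → ℝ) → ℝ} {i : ι}

/-- `P` is an affine function of the `i`-th coordinate, with slope `Q`. -/
def HasCoordSlope (i : ι) (P Q : (ι → ℝ) → ℝ) : Prop :=
  ∀ x t, P (Function.update x i t) = P x + (t - x i) * Q x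

theorem HasCoordSlope.slope_update (h : HasCoordSlope i P Q) (x : ι → ℝ) (t : ℝ) :
    Q (Function.update x i t) = Q x := by
  rcases eq_or_ne t (x i) with rfl | ht
  · rw [Function.update_eq_self]
  · have there := h x t
    have back := h (Function.update x i t) (x i)
    rw [Function.update_idem, Function.update_eq_self, Function.update_self, there] at back
    exact mul_left_cancel₀ (sub_ne_zero.2 ht) (by linarith)

theorem volume_abs_affine_lt_le {q δ : ℝ} (hδ : 0 < δ) (hq : δ ≤ |q|) (p a η : ℝ) :
    volume {t : ℝ | |p + (t - a) * q| < δ * η} ≤ ENNReal.ofReal (2 * η) := by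
  have hq₀ : q ≠ 0 := abs_pos.1 (hδ.trans_le hq)
  rw [← Real.volume_ball (a - p / q)]
  refine measure_mono fun t (ht : |p + (t - a) * q| < δ * η) => ?_
  rw [Metric.mem_ball, Real.dist_eq]
  by_contra! hη
  refine ht.not_ge ?_
  calc δ * η ≤ δ * |t - (a - p / q)| := by gcongr
    _ ≤ |q| * |t - (a - p / q)| := by gcongr
    _ = |p + (t - a) * q| := by rw [← abs_mul]; congr 1; field_simp; ring

variable [Fintype ι] {ν : ι → Measure ℝ} [∀ i, IsProbabilityMeasure (ν i)]

theorem measure_pi_le_of_forall_section_le {S : Set (ι → ℝ)} (hS : MeasurableSet S) (i : ι)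
    {c : ENNReal} (h : ∀ x, ν i {t | Function.update x i t ∈ S} ≤ c) : Measure.pi ν S ≤ c := by
  have hmarginal : ∫⋯∫⁻_{i}, S.indicator 1 ∂ν ≤ ∫⋯∫⁻_{i}, (fun _ => c) ∂ν := by
    intro x
    have hsection : MeasurableSet {t | Function.update x i t ∈ S} :=
      measurable_update x hS
    simp only [lmarginal_singleton, lintegral_const, measure_univ, mul_one]
    exact (lintegral_indicator_one hsection).trans_le (h x)
  have hint := lintegral_le_of_lmarginal_le {i} (measurable_one.indicator hS)
    measurable_const hmarginal
  rwa [lintegral_indicator_one hS, lintegral_const, measure_univ, mul_one] at hint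

theorem HasCoordSlope.measure_abs_lt_le (h : HasCoordSlope i P Q) (hP : Measurable P)
    (hQ : Measurable Q) (hν : ν i ≤ volume) {δ : ℝ} (hδ : 0 < δ) (η : ℝ) :
    Measure.pi ν {x | |P x| < δ * η} ≤
      Measure.pi ν {x | |Q x| < δ} + ENNReal.ofReal (2 * η) := by
  have hcover : {x | |P x| < δ * η} ⊆
      {x | |Q x| < δ} ∪ {x | |P x| < δ * η ∧ δ ≤ |Q x|} := fun x hx =>
    (lt_or_ge |Q x| δ).imp id fun hQx => ⟨hx, hQx⟩
  refine (measure_mono hcover).trans ((measure_union_le _ _).trans ?_)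
  gcongr
  have hmeas : MeasurableSet {x | |P x| < δ * η ∧ δ ≤ |Q x|} :=
    (measurableSet_lt hP.abs measurable_const).inter (measurableSet_le measurable_const hQ.abs)
  refine measure_pi_le_of_forall_section_le hmeas i fun x => ?_
  simp only [mem_ofPred_eq, h.slope_update, h x]
  rcases lt_or_ge |Q x| δ with hQx | hQx
  · simp [hQx.not_ge]
  · exact (measure_mono fun t ht => ht.1).trans
      ((hν _).trans (volume_abs_affine_lt_le hδ hQx _ _ _))

theorem measure_abs_lt_pow_le_of_coordSlope_chain (hν : ∀ i, ν i ≤ volume) {n : ℕ}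
    {P : ℕ → (ι → ℝ) → ℝ} (hP : ∀ k, Measurable (P k))
    (hslope : ∀ k < n, ∃ i, HasCoordSlope i (P k) (P (k + 1))) (hlast : ∀ x, 1 ≤ |P n x|)
    {η : ℝ} (hη : 0 < η) :
    Measure.pi ν {x | |P 0 x| < η ^ n} ≤ ENNReal.ofReal (2 * n * η) := by
  induction n generalizing P with
  | zero => simp [(hlast _).not_gt]
  | succ n ih =>
    obtain ⟨i, hi⟩ := hslope 0 n.succ_pos
    calc Measure.pi ν {x | |P 0 x| < η ^ n * η}
        ≤ Measure.pi ν {x | |P 1 x| < η ^ n} + ENNReal.ofReal (2 * η) :=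
          hi.measure_abs_lt_le (hP 0) (hP 1) (hν i) (pow_pos hη n) η
      _ ≤ ENNReal.ofReal (2 * n * η) + ENNReal.ofReal (2 * η) := by
          gcongr
          exact ih (P := fun k => P (k + 1)) (fun k => hP (k + 1))
            (fun k hk => hslope (k + 1) (by lia)) hlast
      _ = ENNReal.ofReal (2 * (n + 1 : ℕ) * η) := by
          rw [← ENNReal.ofReal_add (by positivity) (by positivity)]
          push_cast
          ring_nf

end Slopes

section HybridMatrix

variable {d : ℕ} {n : Type*} [Fintype n]

/-- The matrix obtained from the product `x * Nᵀ`, with `x (c, i)` as the `(i, c)` entry of `x`,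
by replacing each of the first `k` rows `i` with the `κ i`-th column of `N`, that is, with its
derivative in the variable `x (κ i, i)`. -/
def hybridMatrix (N : Matrix (Fin d) n ℝ) (κ : Fin d → n) (k : ℕ) (x : n × Fin d → ℝ) :
    Matrix (Fin d) (Fin d) ℝ :=
  Matrix.of fun i => if i < k then N.col (κ i) else N.mulVec fun c => x (c, i)

variable (N : Matrix (Fin d) n ℝ) (κ : Fin d → n)

theorem measurable_det_hybridMatrix (k : ℕ) :
    Measurable fun x => (hybridMatrix N κ k x).det := by
  refine (Continuous.matrix_det (continuous_matrix fun i j => ?_)).measurable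
  by_cases hi : i < k
  · simpa [hybridMatrix, hi] using continuous_const
  · simp only [hybridMatrix, hi, Matrix.of_apply, Matrix.mulVec, dotProduct, if_false]
    fun_prop

theorem det_hybridMatrix_self (x : n × Fin d → ℝ) :
    (hybridMatrix N κ d x).det = (N.submatrix id κ).det := by
  rw [← Matrix.det_transpose]
  congr 1
  ext i j
  simp [hybridMatrix]

theorem updateRow_hybridMatrix (i : Fin d) (x : n × Fin d → ℝ) :
    (hybridMatrix N κ i x).updateRow i (N.col (κ i)) = hybridMatrix N κ (i + 1) x := by
  ext a b
  rcases eq_or_ne a i with rfl | ha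
  · simp [hybridMatrix]
  · simp [hybridMatrix, ha, ha.le_iff_lt]

variable [DecidableEq n]

theorem hybridMatrix_update (i : Fin d) (x : n × Fin d → ℝ) (t : ℝ) :
    hybridMatrix N κ i (Function.update x (κ i, i) t) = (hybridMatrix N κ i x).updateRow i
      (hybridMatrix N κ i x i + (t - x (κ i, i)) • N.col (κ i)) := by
  ext a b
  rcases eq_or_ne a i with rfl | ha
  · have hcolumn : (fun c => Function.update x (κ a, a) t (c, a)) =
        (fun c => x (c, a)) + Pi.single (κ a) (t - x (κ a, a)) := by
      ext c
      rcases eq_or_ne c (κ a) with rfl | hc <;> simp [*]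
    simp [hybridMatrix, hcolumn, Matrix.mulVec_add, mul_comm]
  · simp [hybridMatrix, ha]

theorem hasCoordSlope_det_hybridMatrix (i : Fin d) :
    HasCoordSlope (κ i, i) (fun x => (hybridMatrix N κ i x).det)
      (fun x => (hybridMatrix N κ (i + 1) x).det) := fun x t => by
  simp only [hybridMatrix_update, Matrix.det_updateRow_add, Matrix.updateRow_eq_self,
    Matrix.det_updateRow_smul, updateRow_hybridMatrix]

end HybridMatrix

section Minors

theorem exists_det_submatrix_ne_zero_of_rank_eq {K n : Type*} [Field K] [Fintype n] {d : ℕ}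
    {A : Matrix (Fin d) n K} (hA : A.rank = d) :
    ∃ κ : Fin d → n, (A.submatrix id κ).det ≠ 0 := by
  rw [Matrix.rank_eq_finrank_span_cols] at hA
  obtain ⟨f, hf, -, hindep⟩ := Submodule.exists_fun_fin_finrank_span_eq K (range A.col)
  choose g hg using hf
  refine ⟨g ∘ finCongr hA.symm, ?_⟩
  have hcols : (A.submatrix id (g ∘ finCongr hA.symm)).col = f ∘ finCongr hA.symm := by
    ext i j
    simp [← hg]
  rw [← isUnit_iff_ne_zero, ← Matrix.isUnit_iff_isUnit_det,
    ← Matrix.linearIndependent_cols_iff_isUnit, hcols]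
  exact hindep.comp _ (finCongr hA.symm).injective

theorem exists_one_le_abs_det_submatrix {n : Type*} [Fintype n] {d : ℕ}
    {N : Matrix (Fin d) n ℤ} (hN : (N.map fun z => (z : ℝ)).rank = d) :
    ∃ κ : Fin d → n, 1 ≤ |((N.map fun z => (z : ℝ)).submatrix id κ).det| := by
  obtain ⟨κ, hκ⟩ := exists_det_submatrix_ne_zero_of_rank_eq hN
  have hcast : ((N.map fun z => (z : ℝ)).submatrix id κ).det = ((N.submatrix id κ).det : ℝ) :=
    (Int.cast_det _).symm
  rw [hcast] at hκ
  refine ⟨κ, hcast ▸ ?_⟩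
  exact mod_cast Int.one_le_abs (mod_cast hκ)

end Minors

section HalfSphere

theorem multichoose_add_one_le {M : ℕ} (hM : 0 < M) (n : ℕ) :
    (n + 1).multichoose M ≤ (n + 1) * M ^ n := by
  have hchoose (n : ℕ) : (n + 1).multichoose M = (M + n).choose n := by
    rw [Nat.multichoose_eq, Nat.add_right_comm, Nat.add_sub_cancel, Nat.add_comm,
      Nat.choose_symm_add]
  induction n with
  | zero => simp
  | succ n ih =>
    rw [hchoose] at ih ⊢
    have hfactor : M + n + 1 ≤ (n + 2) * M := by nlinarith
    refine Nat.le_of_mul_le_mul_right ?_ n.succ_pos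
    calc (M + n + 1).choose (n + 1) * (n + 1)
        = (M + n + 1) * (M + n).choose n := (Nat.add_one_mul_choose_eq _ _).symm
      _ ≤ (n + 2) * M * ((n + 1) * M ^ n) := Nat.mul_le_mul hfactor ih
      _ = (n + 1 + 1) * M ^ (n + 1) * (n + 1) := by ring

variable {ι : Type*} [Fintype ι] [DecidableEq ι]

theorem card_piAntidiag_univ (M : ℕ) :
    ((Finset.univ : Finset ι).piAntidiag M).card = (Fintype.card ι).multichoose M := by
  rw [← Finset.map_sym_eq_piAntidiag, Finset.card_map, Finset.sym_univ, Finset.card_univ,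
    Sym.card_sym_eq_multichoose]

/-- The half `0 ≤ v i₀` of the `ℓ¹`-sphere of radius `M` in `ℤ^ι`. It meets every pair `{v, -v}`
of antipodal points of the sphere. -/
def halfSphere (i₀ : ι) (M : ℕ) : Finset (ι → ℤ) :=
  (Finset.univ.piAntidiag M).biUnion fun a =>
    Fintype.piFinset fun i => if i = i₀ then {(a i : ℤ)} else {(a i : ℤ), -(a i : ℤ)}

theorem mem_halfSphere {i₀ : ι} {M : ℕ} {v : ι → ℤ} :
    v ∈ halfSphere i₀ M ↔ 0 ≤ v i₀ ∧ ∑ i, (v i).natAbs = M := by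
  simp only [halfSphere, Finset.mem_biUnion, Fintype.mem_piFinset]
  constructor
  · rintro ⟨a, ha, hv⟩
    have habs (i : ι) : (v i).natAbs = a i := by
      have hvi := hv i
      split_ifs at hvi
      · rw [Finset.mem_singleton.1 hvi, Int.natAbs_natCast]
      · exact Int.natAbs_eq_iff.2 (by simpa using hvi)
    have hv₀ := hv i₀
    simp_all
  · rintro ⟨hv₀, hv⟩
    refine ⟨fun i => (v i).natAbs, by simpa using hv, fun i => ?_⟩
    split_ifs with hi
    · subst hi
      simpa using (abs_of_nonneg hv₀).symm
    · simpa using (abs_choice (v i)).imp (fun h => h.symm) (fun h => by rw [h, neg_neg])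

theorem two_mul_card_halfSphere_le (i₀ : ι) {M : ℕ} (hM : 0 < M) :
    2 * (halfSphere i₀ M).card ≤
      2 ^ Fintype.card ι * (Fintype.card ι * M ^ (Fintype.card ι - 1)) := by
  obtain ⟨n, hn⟩ : ∃ n, Fintype.card ι = n + 1 :=
    Nat.exists_eq_succ_of_ne_zero (Fintype.card_pos_iff.2 ⟨i₀⟩).ne'
  have hsigns (a : ι → ℕ) : (Fintype.piFinset fun i =>
      if i = i₀ then {(a i : ℤ)} else {(a i : ℤ), -(a i : ℤ)}).card ≤ 2 ^ n := by
    rw [Fintype.card_piFinset, ← Finset.mul_prod_erase _ _ (Finset.mem_univ i₀), if_pos rfl,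
      Finset.card_singleton, one_mul]
    refine (Finset.prod_le_pow_card _ _ 2 fun i hi => ?_).trans_eq ?_
    · rw [if_neg (Finset.ne_of_mem_erase hi)]
      exact Finset.card_le_two
    · rw [Finset.card_erase_of_mem (Finset.mem_univ i₀), Finset.card_univ, hn, Nat.add_sub_cancel]
  have hcard : (halfSphere i₀ M).card ≤ (n + 1).multichoose M * 2 ^ n := by
    rw [← hn, ← card_piAntidiag_univ]
    exact Finset.card_biUnion_le_card_mul _ _ _ fun a _ => hsigns a
  rw [hn, Nat.add_sub_cancel]
  calc 2 * (halfSphere i₀ M).card ≤ 2 * ((n + 1).multichoose M * 2 ^ n) := by gcongr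
    _ ≤ 2 * ((n + 1) * M ^ n * 2 ^ n) := by gcongr; exact multichoose_add_one_le hM n
    _ = 2 ^ (n + 1) * ((n + 1) * M ^ n) := by ring

theorem two_mul_card_halfSphere_le_rpow (i₀ : ι) {M : ℕ} (hM : 0 < M) :
    (2 * (halfSphere i₀ M).card : ℝ) ≤
      2 ^ Fintype.card ι * (Fintype.card ι * (M : ℝ) ^ ((Fintype.card ι : ℝ) - 1)) := by
  have hpow : (M : ℝ) ^ ((Fintype.card ι : ℝ) - 1) = (M ^ (Fintype.card ι - 1) : ℕ) := by
    rw [Nat.cast_pow, ← Real.rpow_natCast, Nat.cast_sub (Fintype.card_pos_iff.2 ⟨i₀⟩),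
      Nat.cast_one]
  rw [hpow]
  exact_mod_cast two_mul_card_halfSphere_le i₀ hM

end HalfSphere

section FrequencyBox

theorem volume_preserving_uncurry {m n : Type*} [Fintype m] [Fintype n] :
    MeasurePreserving (Function.uncurry : (m → n → ℝ) → m × n → ℝ) := by
  have hmeas : Measurable (Function.uncurry : (m → n → ℝ) → m × n → ℝ) :=
    (MeasurableEquiv.curry m n ℝ).symm.measurable
  refine ⟨hmeas, (Measure.pi_eq fun s hs => ?_).symm⟩
  have hpreimage : Function.uncurry ⁻¹' univ.pi s =
      univ.pi fun i : m => univ.pi fun j : n => s (i, j) := by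
    ext x
    simp [mem_pi]
  rw [Measure.map_apply hmeas (.univ_pi hs), hpreimage, volume_pi_pi, Fintype.prod_prod_type]
  simp only [volume_pi_pi]

variable {d l : ℕ}

theorem volume_preserving_uncurry_ofLp :
    MeasurePreserving fun (ω : Fin l → EuclideanSpace ℝ (Fin d)) (p : Fin l × Fin d) =>
      ω p.1 p.2 :=
  volume_preserving_uncurry.comp
    (volume_preserving_pi fun _ : Fin l => PiLp.volume_preserving_ofLp (Fin d))

/-- The box `([-1/2, 1/2]^d)^l` of frequency vectors. -/
def frequencyBox (d l : ℕ) : Set (Fin l → EuclideanSpace ℝ (Fin d)) :=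
  {ω | ∀ k i, ω k i ∈ Icc (-(1 : ℝ) / 2) (1 / 2)}

theorem volume_frequencyBox_inter_preimage {S : Set (Fin l × Fin d → ℝ)}
    (hS : MeasurableSet S) :
    volume (frequencyBox d l ∩ (fun ω p => ω p.1 p.2) ⁻¹' S) =
      Measure.pi (fun _ : Fin l × Fin d => volume.restrict (Icc (-(1 : ℝ) / 2) (1 / 2))) S := by
  have hbox : frequencyBox d l = (fun ω (p : Fin l × Fin d) => ω p.1 p.2) ⁻¹'
      univ.pi fun _ => Icc (-(1 : ℝ) / 2) (1 / 2) := by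
    ext ω
    simp only [frequencyBox, mem_preimage, mem_univ_pi, Prod.forall, mem_ofPred_eq]
  have hcube : MeasurableSet (univ.pi fun _ : Fin l × Fin d => Icc (-(1 : ℝ) / 2) (1 / 2)) :=
    .univ_pi fun _ => measurableSet_Icc
  rw [hbox, ← preimage_inter, inter_comm, volume_preserving_uncurry_ofLp.measure_preimage
    (hS.inter hcube).nullMeasurableSet, ← Measure.restrict_pi_pi, Measure.restrict_apply hS,
    volume_pi]

/-- The integer matrices of full row rank. -/
def IsNondegenerate (N : Matrix (Fin d) (Fin l) ℤ) : Prop :=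
  (N.map fun z => (z : ℝ)).rank = d

theorem volume_abs_thetaDet_lt_pow_le {N : Matrix (Fin d) (Fin l) ℤ} (hN : IsNondegenerate N)
    {η : ℝ} (hη : 0 < η) :
    volume {ω ∈ frequencyBox d l | |thetaDet ω N| < η ^ d} ≤ ENNReal.ofReal (2 * d * η) := by
  have hprob : IsProbabilityMeasure (volume.restrict (Icc (-(1 : ℝ) / 2) (1 / 2))) :=
    ⟨by norm_num [Real.volume_Icc]⟩
  obtain ⟨κ, hκ⟩ := exists_one_le_abs_det_submatrix hN
  set A := hybridMatrix (N.map fun z => (z : ℝ)) κ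
  have hmeas (k : ℕ) : Measurable fun x => (A k x).det := measurable_det_hybridMatrix _ κ k
  have hdet (ω : Fin l → EuclideanSpace ℝ (Fin d)) :
      thetaDet ω N = (A 0 fun p => ω p.1 p.2).det := rfl
  calc volume {ω ∈ frequencyBox d l | |thetaDet ω N| < η ^ d}
      = Measure.pi (fun _ => volume.restrict (Icc (-(1 : ℝ) / 2) (1 / 2)))
          {x | |(A 0 x).det| < η ^ d} := by
        simp only [hdet]
        exact volume_frequencyBox_inter_preimage
          (measurableSet_lt (hmeas 0).abs measurable_const)
    _ ≤ ENNReal.ofReal (2 * d * η) :=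
        measure_abs_lt_pow_le_of_coordSlope_chain (fun _ => Measure.restrict_le_self) hmeas
          (fun k hk => ⟨_, hasCoordSlope_det_hybridMatrix _ κ ⟨k, hk⟩⟩)
          (fun x => by rwa [det_hybridMatrix_self]) hη

end FrequencyBox

section Resonances

variable {d l : ℕ}

theorem IsNondegenerate.neg {N : Matrix (Fin d) (Fin l) ℤ} (hN : IsNondegenerate N) :
    IsNondegenerate (-N) := by
  have hcast : ((-N).map fun z => (z : ℝ)) = (-1 : ℝ) • N.map fun z => (z : ℝ) := by
    ext
    simp
  rw [IsNondegenerate, hcast, Matrix.rank_smul_of_mem_nonZeroDivisors _ (by simp), hN]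

theorem abs_thetaDet_neg (ω : Fin l → EuclideanSpace ℝ (Fin d)) (N : Matrix (Fin d) (Fin l) ℤ) :
    |thetaDet ω (-N)| = |thetaDet ω N| := by
  have hneg : (Matrix.of fun i j => ∑ k, (((-N) j k : ℤ) : ℝ) * ω k i) =
      -Matrix.of fun i j : Fin d => ∑ k, (N j k : ℝ) * ω k i := by
    ext
    simp
  rw [thetaDet, thetaDet, hneg, Matrix.det_neg, abs_mul, abs_pow, abs_neg, abs_one, one_pow,
    one_mul]

theorem starNorm_neg (N : Matrix (Fin d) (Fin l) ℤ) : starNorm (-N) = starNorm N := by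
  simp [starNorm]

theorem IsNondegenerate.starNorm_pos (hd : 0 < d) {N : Matrix (Fin d) (Fin l) ℤ}
    (hN : IsNondegenerate N) : 0 < starNorm N := by
  rw [starNorm, Nat.cast_pos, Nat.pos_iff_ne_zero]
  intro hzero
  have hN₀ : N = 0 := by
    ext j k
    simpa using Finset.sum_eq_zero_iff.1 (Finset.sum_eq_zero_iff.1 hzero j (by simp)) k (by simp)
  rw [IsNondegenerate, hN₀, Matrix.map_zero _ Int.cast_zero, Matrix.rank_zero] at hN
  exact hd.ne hN

/-- The frequency vectors in the box at which some nondegenerate matrix of norm `M` has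
determinant smaller than `ε`. -/
def resonantSet (d l M : ℕ) (ε : ℝ) : Set (Fin l → EuclideanSpace ℝ (Fin d)) :=
  {ω ∈ frequencyBox d l | ∃ N : Matrix (Fin d) (Fin l) ℤ,
    IsNondegenerate N ∧ starNorm N = M ∧ |thetaDet ω N| < ε}

theorem resonantSet_subset_iUnion_halfSphere (p₀ : Fin d × Fin l) (M : ℕ) (ε : ℝ) :
    resonantSet d l M ε ⊆ ⋃ v ∈ halfSphere p₀ M,
      {ω ∈ frequencyBox d l | IsNondegenerate (Matrix.of (Function.curry v)) ∧
        |thetaDet ω (Matrix.of (Function.curry v))| < ε} := by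
  rintro ω ⟨hω, N, hN, hnorm, hdet⟩
  wlog hsign : 0 ≤ N p₀.1 p₀.2 generalizing N
  · exact this (-N) hN.neg (by rwa [starNorm_neg])
      (by rwa [abs_thetaDet_neg]) (by simp only [Matrix.neg_apply]; lia)
  refine mem_iUnion₂.2 ⟨fun p => N p.1 p.2, mem_halfSphere.2 ⟨hsign, ?_⟩, hω, hN, hdet⟩
  rw [Fintype.sum_prod_type]
  exact Nat.cast_injective hnorm

theorem volume_resonantSet_le {M : ℕ} (hM : 0 < M) {η : ℝ} (hη : 0 < η) :
    volume (resonantSet d l M (η ^ d)) ≤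
      ENNReal.ofReal (2 ^ (l * d) * l * d ^ 2 * (M : ℝ) ^ ((l : ℝ) * d - 1) * η) := by
  rcases isEmpty_or_nonempty (Fin d × Fin l) with hempty | ⟨⟨p₀⟩⟩
  · have hnorm (N : Matrix (Fin d) (Fin l) ℤ) : starNorm N = 0 := by
      rw [starNorm, ← Fintype.sum_prod_type' fun j k => (N j k).natAbs]
      simp
    simp [resonantSet, hnorm, (Nat.cast_ne_zero (R := ℝ)).2 hM.ne' |>.symm]
  have hterm (N : Matrix (Fin d) (Fin l) ℤ) :
      volume {ω ∈ frequencyBox d l | IsNondegenerate N ∧ |thetaDet ω N| < η ^ d} ≤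
        ENNReal.ofReal (2 * d * η) := by
    by_cases hN : IsNondegenerate N
    · simpa only [hN, true_and] using volume_abs_thetaDet_lt_pow_le hN hη
    · simp [hN]
  have hcard := two_mul_card_halfSphere_le_rpow p₀ hM
  rw [Fintype.card_prod, Fintype.card_fin, Fintype.card_fin, Nat.mul_comm d l,
    Nat.cast_mul] at hcard
  calc volume (resonantSet d l M (η ^ d))
      ≤ ∑ v ∈ halfSphere p₀ M, ENNReal.ofReal (2 * d * η) :=
        (measure_mono (resonantSet_subset_iUnion_halfSphere p₀ M _)).trans
          ((measure_biUnion_finset_le _ _).trans (Finset.sum_le_sum fun v _ => hterm _))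
    _ = ENNReal.ofReal (2 * (halfSphere p₀ M).card * (d * η)) := by
        rw [Finset.sum_const, ← ENNReal.ofReal_nsmul, nsmul_eq_mul]
        ring_nf
    _ ≤ ENNReal.ofReal (2 ^ (l * d) * (l * d * (M : ℝ) ^ ((l : ℝ) * d - 1)) * (d * η)) := by
        gcongr
    _ = _ := by ring_nf

end Resonances

section Generic

variable {d l : ℕ} {μhat : ℝ}

theorem summable_add_one_rpow_of_lt (hd : 0 < d) (hμ : (l : ℝ) * (d : ℝ) ^ 2 < μhat) :
    Summable fun M : ℕ => ((M : ℝ) + 1) ^ ((l : ℝ) * d - μhat / d - 1) := by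
  have hexponent : (l : ℝ) * d - μhat / d - 1 < -1 := by
    have hdiv : (l : ℝ) * d < μhat / d := by
      rw [lt_div_iff₀ (by positivity)]
      linarith
    linarith
  simpa using (summable_nat_add_iff 1).2 (Real.summable_nat_rpow.2 hexponent)

/-- The frequency vectors in the box that violate the Strong Diophantine Condition with constant
`B₀` and exponent `μhat`, in the strict form. -/
def sdcViolators (d l : ℕ) (μhat B₀ : ℝ) : Set (Fin l → EuclideanSpace ℝ (Fin d)) :=
  {ω ∈ frequencyBox d l | ∃ N : Matrix (Fin d) (Fin l) ℤ,
    IsNondegenerate N ∧ |thetaDet ω N| < B₀ * starNorm N ^ (-μhat)}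

theorem sdcViolators_subset_iUnion_resonantSet (hd : 0 < d) (μhat B₀ : ℝ) :
    sdcViolators d l μhat B₀ ⊆
      ⋃ M : ℕ, resonantSet d l (M + 1) (B₀ * ((M : ℝ) + 1) ^ (-μhat)) := by
  rintro ω ⟨hω, N, hN, hdet⟩
  obtain ⟨M, hM⟩ : ∃ M : ℕ, starNorm N = (M + 1 : ℕ) := by
    have hpos := hN.starNorm_pos hd
    rw [starNorm, Nat.cast_pos] at hpos
    exact ⟨_, congrArg Nat.cast (Nat.sub_add_cancel hpos).symm⟩
  refine mem_iUnion.2 ⟨M, hω, N, hN, hM, ?_⟩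
  rwa [hM, Nat.cast_succ] at hdet

theorem volume_resonantSet_rpow_le (hd : 0 < d) (μhat : ℝ) {B₀ : ℝ} (hB₀ : 0 < B₀) (M : ℕ) :
    volume (resonantSet d l (M + 1) (B₀ * ((M : ℝ) + 1) ^ (-μhat))) ≤
      ENNReal.ofReal (2 ^ (l * d) * l * d ^ 2 *
        ((M : ℝ) + 1) ^ ((l : ℝ) * d - μhat / d - 1) * B₀ ^ ((1 : ℝ) / d)) := by
  have hM : (0 : ℝ) < (M : ℝ) + 1 := by positivity
  set η : ℝ := ((M : ℝ) + 1) ^ (-(μhat / d)) * B₀ ^ ((1 : ℝ) / d) with hη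
  have hηpow : B₀ * ((M : ℝ) + 1) ^ (-μhat) = η ^ d := by
    rw [hη, mul_pow, ← Real.rpow_mul_natCast hM.le, ← Real.rpow_mul_natCast hB₀.le, neg_mul,
      div_mul_cancel₀ _ (by positivity), div_mul_cancel₀ _ (by positivity), Real.rpow_one,
      mul_comm]
  have hexponent : ((M : ℝ) + 1) ^ ((l : ℝ) * d - μhat / d - 1) =
      ((M : ℝ) + 1) ^ ((l : ℝ) * d - 1) * ((M : ℝ) + 1) ^ (-(μhat / d)) := by
    rw [← Real.rpow_add hM]
    ring_nf
  rw [hηpow, hexponent]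
  refine (volume_resonantSet_le M.succ_pos (by positivity)).trans_eq ?_
  rw [hη, Nat.cast_succ]
  ring_nf

theorem volume_sdcViolators_le (hd : 0 < d) (hμ : (l : ℝ) * (d : ℝ) ^ 2 < μhat) {B₀ : ℝ}
    (hB₀ : 0 < B₀) :
    volume (sdcViolators d l μhat B₀) ≤ ENNReal.ofReal ((2 ^ (l * d) * l * d ^ 2 *
      ∑' M : ℕ, ((M : ℝ) + 1) ^ ((l : ℝ) * d - μhat / d - 1)) * B₀ ^ ((1 : ℝ) / d)) := by
  rw [← tsum_mul_left, ← tsum_mul_right, ENNReal.ofReal_tsum_of_nonneg (fun M => by positivity)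
    (((summable_add_one_rpow_of_lt hd hμ).mul_left _).mul_right _)]
  exact (measure_mono (sdcViolators_subset_iUnion_resonantSet hd μhat B₀)).trans
    ((measure_iUnion_le _).trans
      (ENNReal.tsum_le_tsum fun M => volume_resonantSet_rpow_le hd μhat hB₀ M))

theorem SDC.of_notMem_sdcViolators (hd : 0 < d) {ω : Fin l → EuclideanSpace ℝ (Fin d)}
    (hω : ω ∈ frequencyBox d l) {B₀ B₁ : ℝ} (hB : B₁ < B₀)
    (hgood : ω ∉ sdcViolators d l μhat B₀) : SDC d l ω B₁ μhat := fun N hN => by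
  have hpow : 0 < starNorm N ^ (-μhat) :=
    Real.rpow_pos_of_pos (IsNondegenerate.starNorm_pos hd hN) _
  calc B₁ * starNorm N ^ (-μhat) < B₀ * starNorm N ^ (-μhat) := by gcongr
    _ ≤ |thetaDet ω N| := not_lt.1 fun hdet => hgood ⟨hω, N, hN, hdet⟩

theorem volume_not_exists_sdc_eq_zero (hd : 0 < d) (hμ : (l : ℝ) * (d : ℝ) ^ 2 < μhat) :
    volume {ω ∈ frequencyBox d l | ¬∃ B₀ : ℝ, 0 < B₀ ∧ SDC d l ω B₀ μhat} = 0 := by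
  set C : ℝ := 2 ^ (l * d) * l * d ^ 2 *
    ∑' M : ℕ, ((M : ℝ) + 1) ^ ((l : ℝ) * d - μhat / d - 1)
  have hbound (B₀ : ℝ) (hB₀ : 0 < B₀) :
      volume {ω ∈ frequencyBox d l | ¬∃ B₀ : ℝ, 0 < B₀ ∧ SDC d l ω B₀ μhat} ≤
        ENNReal.ofReal (C * B₀ ^ ((1 : ℝ) / d)) := by
    refine (measure_mono ?_).trans (volume_sdcViolators_le hd hμ hB₀)
    rintro ω ⟨hω, hbad⟩
    by_contra hgood
    exact hbad ⟨B₀ / 2, half_pos hB₀,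
      SDC.of_notMem_sdcViolators hd hω (half_lt_self hB₀) hgood⟩
  have hlim : Filter.Tendsto (fun B₀ : ℝ => ENNReal.ofReal (C * B₀ ^ ((1 : ℝ) / d)))
      (nhdsWithin 0 (Ioi 0)) (nhds 0) := by
    have hcont : Continuous fun B₀ : ℝ => ENNReal.ofReal (C * B₀ ^ ((1 : ℝ) / d)) :=
      ENNReal.continuous_ofReal.comp
        (continuous_const.mul (Real.continuous_rpow_const (by positivity)))
    refine (hcont.tendsto' 0 0 ?_).mono_left nhdsWithin_le_nhds
    rw [Real.zero_rpow (by positivity), mul_zero, ENNReal.ofReal_zero]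
  exact le_antisymm (ge_of_tendsto hlim (eventually_nhdsWithin_of_forall hbound)) zero_le

end Generic

theorem sdc_generic_general (d l : ℕ) (hd : 0 < d)
    (μhat : ℝ) (hμ : (l : ℝ) * (d : ℝ) ^ 2 < μhat) :
    Summable (fun M : ℕ => ((M : ℝ) + 1) ^ ((l : ℝ) * d - μhat / d - 1)) ∧
    (∀ B₀ : ℝ, 0 < B₀ →
      volume {ω : Fin l → EuclideanSpace ℝ (Fin d) |
          (∀ k i, ω k i ∈ Set.Icc (-(1 : ℝ) / 2) (1 / 2)) ∧
          ∃ N : Matrix (Fin d) (Fin l) ℤ, (N.map fun z => (z : ℝ)).rank = d ∧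
            |thetaDet ω N| < B₀ * starNorm N ^ (-μhat)} ≤
        ENNReal.ofReal
          ((2 ^ (l * d) * l * d ^ 2 *
              ∑' M : ℕ, ((M : ℝ) + 1) ^ ((l : ℝ) * d - μhat / d - 1)) *
            B₀ ^ ((1 : ℝ) / d))) ∧
    volume {ω : Fin l → EuclideanSpace ℝ (Fin d) |
        (∀ k i, ω k i ∈ Set.Icc (-(1 : ℝ) / 2) (1 / 2)) ∧
        ¬∃ B₀ : ℝ, 0 < B₀ ∧ SDC d l ω B₀ μhat} = 0 :=
  ⟨summable_add_one_rpow_of_lt hd hμ, fun _ hB₀ => volume_sdcViolators_le hd hμ hB₀,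
    volume_not_exists_sdc_eq_zero hd hμ⟩

/-- Fix `μhat > l·d²`.  For every `B₀ > 0` the measure of the set of
frequency vectors in the box for which some nondegenerate integer matrix `N` violates
the SDC bound is at most `C(μhat)·B₀^{1/d}`, where
`C(μhat) = 2^{ld}·l·d²·∑_{M=1}^∞ M^{ld−μhat/d−1} < ∞`.  Consequently, almost every
frequency vector in the box satisfies the SDC with exponent `μhat` and some constant
`B₀ = B₀(ω⃗) > 0`. -/
theorem sdc_generic (d l : ℕ) (hd : 2 ≤ d) (hl : d < l)
    (μhat : ℝ) (hμ : (l : ℝ) * (d : ℝ) ^ 2 < μhat) :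
    Summable (fun M : ℕ => ((M : ℝ) + 1) ^ ((l : ℝ) * d - μhat / d - 1)) ∧
    (∀ B₀ : ℝ, 0 < B₀ →
      volume {ω : Fin l → EuclideanSpace ℝ (Fin d) |
          (∀ k i, ω k i ∈ Set.Icc (-(1 : ℝ)/2) (1/2)) ∧
          ∃ N : Matrix (Fin d) (Fin l) ℤ, (N.map fun z => (z : ℝ)).rank = d ∧
            |thetaDet ω N| < B₀ * starNorm N ^ (-μhat)} ≤
        ENNReal.ofReal
          ((2 ^ (l * d) * l * d ^ 2 *
              ∑' M : ℕ, ((M : ℝ) + 1) ^ ((l : ℝ) * d - μhat / d - 1)) *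
            B₀ ^ ((1 : ℝ)/d))) ∧
    volume {ω : Fin l → EuclideanSpace ℝ (Fin d) |
        (∀ k i, ω k i ∈ Set.Icc (-(1 : ℝ)/2) (1/2)) ∧
        ¬ ∃ B₀ : ℝ, 0 < B₀ ∧ SDC d l ω B₀ μhat} = 0 := by
  exact sdc_generic_general d l (by lia) μhat hμ

end
end
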